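/- arXiv:2301.08502 — 3 statements merged into one kernel-verified Lean document; each statement's English description precedes it below -/
import Mathlib

section
/- (Telescoped dynamics-mismatch bound.) Let P and P̂ be two dynamics, π a policy, and for t ≥ 1 set ε_t^m := E_{(s,a)∼ν_{t-1}^{π,P̂}}[D_TV(P̂(·|s,a), P(·|s,a))]. Then for every t ≥ 0, the state-action distributions at time t under the model and under the true dynamics satisfy D_TV(ν_t^{π,P̂}, ν_t^{π,P}) ≤ Σ_{i=1}^{t} ε_i^m (with the empty sum equal to 0 at t = 0). -/
open scoped ENNReal

noncomputable section

/-- Total variation distance between two probability mass functions on a countable type: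
`D_TV(p, q) = (1/2) * Σ_x |p(x) - q(x)|`. -/
def tv {X : Type*} (p q : PMF X) : ℝ :=
  (1 / 2) * ∑' x : X, |(p x).toReal - (q x).toReal|

/-- The state-action distribution at time `t` under initial distribution `ρ0`, policy `π`
and dynamics `P`:  `ν_0(s,a) = ρ0(s)·π(a|s)` and
`ν_{t+1}(s',a') = Σ_{s,a} ν_t(s,a)·P(s'|s,a)·π(a'|s')`. -/
def nu {S A : Type*} (ρ0 : PMF S) (π : S → PMF A) (P : S × A → PMF S) : ℕ → PMF (S × A)
  | 0 => ρ0.bind fun s => (π s).map fun a => (s, a)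
  | (t + 1) => (nu ρ0 π P t).bind fun sa =>
      (P sa).bind fun s' => (π s').map fun a' => (s', a')

/-- The discounted return `J_P(π) = Σ_{t=0}^∞ γ^t · E_{(s,a)∼ν_t^{π,P}}[R(s,a)]`. -/
def J {S A : Type*} (R : S × A → ℝ) (γ : ℝ) (ρ0 : PMF S) (π : S → PMF A)
    (P : S × A → PMF S) : ℝ :=
  ∑' t : ℕ, γ ^ t * ∑' sa : S × A, ((nu ρ0 π P t) sa).toReal * R sa

theorem pmf_summable_toReal {X : Type*} (p : PMF X) : Summable fun x => (p x).toReal :=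
  ENNReal.summable_toReal p.tsum_coe_ne_top

theorem pmf_tsum_toReal {X : Type*} (p : PMF X) : ∑' x, (p x).toReal = 1 := by
  rw [← ENNReal.tsum_toReal_eq (fun x => p.apply_ne_top x), p.tsum_coe]; simp

theorem pmf_bind_toReal {X Y : Type*} (p : PMF X) (K : X → PMF Y) (y : Y) :
    ((p.bind K) y).toReal = ∑' x, (p x).toReal * (K x y).toReal := by
  rw [PMF.bind_apply, ENNReal.tsum_toReal_eq
    (fun x => ENNReal.mul_ne_top (p.apply_ne_top x) ((K x).apply_ne_top y))]
  simp [ENNReal.toReal_mul]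

theorem pmf_summable_prod {X Y : Type*} (p : PMF X) (K : X → PMF Y) :
    Summable fun z : X × Y => (p z.1).toReal * (K z.1 z.2).toReal := by
  rw [summable_prod_of_nonneg (fun z => mul_nonneg ENNReal.toReal_nonneg ENNReal.toReal_nonneg)]
  refine ⟨fun x => Summable.mul_left (p x).toReal (pmf_summable_toReal (K x)), ?_⟩
  simp only [tsum_mul_left, pmf_tsum_toReal, mul_one]
  exact pmf_summable_toReal p

theorem pmf_summable_diff {X : Type*} (p q : PMF X) :
    Summable fun x => |(p x).toReal - (q x).toReal| :=
  ((pmf_summable_toReal p).sub (pmf_summable_toReal q)).abs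

theorem abs_swap_le {X Y : Type*} (f : X × Y → ℝ) (hf : Summable f) :
    ∑' y, |∑' x, f (x, y)| ≤ ∑' x, ∑' y, |f (x, y)| := by
  have ha : Summable fun z => |f z| := hf.abs
  have hs : Summable fun z : Y × X => |f (z.2, z.1)| := ha.prod_symm
  have h1 : ∀ y, |∑' x, f (x, y)| ≤ ∑' x, |f (x, y)| := fun y => by
    have := norm_tsum_le_tsum_norm (f := fun x => f (x, y)) (by simpa using hs.prod_factor y)
    simpa using this
  calc ∑' y, |∑' x, f (x, y)| ≤ ∑' y, ∑' x, |f (x, y)| :=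
        (Summable.of_nonneg_of_le (fun _ => abs_nonneg _) h1 hs.prod).tsum_le_tsum h1 hs.prod
    _ = ∑' x, ∑' y, |f (x, y)| := ha.tsum_comm (f := fun x y => |f (x, y)|)

theorem tv_nonneg {X : Type*} (p q : PMF X) : 0 ≤ tv p q :=
  mul_nonneg (by norm_num) (tsum_nonneg fun _ => abs_nonneg _)

theorem tv_le_one {X : Type*} (p q : PMF X) : tv p q ≤ 1 := by
  have h : ∑' x, |(p x).toReal - (q x).toReal| ≤ ∑' x, ((p x).toReal + (q x).toReal) :=
    (pmf_summable_diff p q).tsum_le_tsum (fun x => by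
      have h1 : 0 ≤ (p x).toReal := ENNReal.toReal_nonneg
      have h2 : 0 ≤ (q x).toReal := ENNReal.toReal_nonneg
      rw [abs_le]; constructor <;> linarith)
      ((pmf_summable_toReal p).add (pmf_summable_toReal q))
  rw [(pmf_summable_toReal p).tsum_add (pmf_summable_toReal q), pmf_tsum_toReal,
    pmf_tsum_toReal] at h
  unfold tv; linarith

theorem tv_triangle {X : Type*} (p q r : PMF X) : tv p r ≤ tv p q + tv q r := by
  have h := (pmf_summable_diff p r).tsum_le_tsum
    (fun x => abs_sub_le (p x).toReal (q x).toReal (r x).toReal)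
    ((pmf_summable_diff p q).add (pmf_summable_diff q r))
  rw [(pmf_summable_diff p q).tsum_add (pmf_summable_diff q r)] at h
  unfold tv; linarith

theorem tv_bind_left {X Y : Type*} (p : PMF X) (K L : X → PMF Y) :
    tv (p.bind K) (p.bind L) ≤ ∑' x, (p x).toReal * tv (K x) (L x) := by
  have hK := pmf_summable_prod p K
  have hL := pmf_summable_prod p L
  have h := abs_swap_le _ (hK.sub hL)
  have e1 : ∀ y, ((p.bind K) y).toReal - ((p.bind L) y).toReal =
      ∑' x, ((p x).toReal * (K x y).toReal - (p x).toReal * (L x y).toReal) := fun y => by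
    rw [pmf_bind_toReal, pmf_bind_toReal]
    exact ((hK.prod_symm.prod_factor y).tsum_sub (hL.prod_symm.prod_factor y)).symm
  have e2 : ∀ x, (p x).toReal * tv (K x) (L x) =
      1 / 2 * ∑' y, |(p x).toReal * (K x y).toReal - (p x).toReal * (L x y).toReal| := fun x => by
    simp only [← mul_sub, abs_mul, tsum_mul_left, tv, ENNReal.abs_toReal]
    ring
  simp only [e2, tsum_mul_left]
  unfold tv
  simp only [e1]
  linarith

theorem tv_bind_right {X Y : Type*} (p q : PMF X) (K : X → PMF Y) :
    tv (p.bind K) (q.bind K) ≤ tv p q := by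
  have hK := pmf_summable_prod p K
  have hL := pmf_summable_prod q K
  have h := abs_swap_le _ (hK.sub hL)
  have e1 : ∀ y, ((p.bind K) y).toReal - ((q.bind K) y).toReal =
      ∑' x, ((p x).toReal * (K x y).toReal - (q x).toReal * (K x y).toReal) := fun y => by
    rw [pmf_bind_toReal, pmf_bind_toReal]
    exact ((hK.prod_symm.prod_factor y).tsum_sub (hL.prod_symm.prod_factor y)).symm
  simp only [← sub_mul, abs_mul, tsum_mul_left, ENNReal.abs_toReal, pmf_tsum_toReal,
    mul_one] at h e1
  unfold tv
  simp only [e1]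
  linarith

/-- **Telescoped dynamics-mismatch bound.**  For every `t ≥ 0`,
`D_TV(ν_t^{π,P̂}, ν_t^{π,P}) ≤ Σ_{i=1}^t ε_i^m`. -/
theorem tv_nu_le_sum_model_errors {S A : Type*} [Countable S] [Countable A]
    (P Phat : S × A → PMF S) (π : S → PMF A) (ρ0 : PMF S)
    (εm : ℕ → ℝ)
    (hεm : ∀ i : ℕ, εm (i + 1) =
      ∑' sa : S × A, ((nu ρ0 π Phat i) sa).toReal * tv (Phat sa) (P sa)) :
    ∀ t : ℕ, tv (nu ρ0 π Phat t) (nu ρ0 π P t) ≤ ∑ i ∈ Finset.range t, εm (i + 1) := by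
  intro t
  induction t with
  | zero => simp [tv, nu]
  | succ t ih =>
    rw [Finset.sum_range_succ, hεm t]
    have h1 := tv_triangle (nu ρ0 π Phat (t + 1))
      ((nu ρ0 π Phat t).bind fun sa => (P sa).bind fun s' => (π s').map fun a' => (s', a'))
      (nu ρ0 π P (t + 1))
    have h2 := tv_bind_right (nu ρ0 π Phat t) (nu ρ0 π P t)
      (fun sa => (P sa).bind fun s' => (π s').map fun a' => (s', a'))
    have h3 := tv_bind_left (nu ρ0 π Phat t)
      (fun sa => (Phat sa).bind fun s' => (π s').map fun a' => (s', a'))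
      (fun sa => (P sa).bind fun s' => (π s').map fun a' => (s', a'))
    have hs : ∀ g : S × A → ℝ, (∀ x, 0 ≤ g x) → (∀ x, g x ≤ 1) →
        Summable fun x => ((nu ρ0 π Phat t) x).toReal * g x := fun g h0 hg =>
      Summable.of_nonneg_of_le (fun x => mul_nonneg ENNReal.toReal_nonneg (h0 x))
        (fun x => mul_le_of_le_one_right ENNReal.toReal_nonneg (hg x))
        (pmf_summable_toReal _)
    have h4 := (hs _ (fun sa => tv_nonneg _ _) (fun sa => tv_le_one
        ((Phat sa).bind fun s' => (π s').map fun a' => (s', a'))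
        ((P sa).bind fun s' => (π s').map fun a' => (s', a')))).tsum_le_tsum
      (fun sa => mul_le_mul_of_nonneg_left
        (tv_bind_right (Phat sa) (P sa) _) ENNReal.toReal_nonneg)
      (hs _ (fun sa => tv_nonneg _ _) (fun sa => tv_le_one (Phat sa) (P sa)))
    rw [nu, nu] at h1 ⊢
    linarith
end
end

section
/- (State-action distribution distance under policy shift.) Let P be a dynamics, π₁ and π₂ two policies, and ε_π := sup_{s∈S} D_TV(π₁(·|s), π₂(·|s)). Then for every t ≥ 0, the state-action distributions at time t generated by the two policies under the same dynamics P and the same initial distribution satisfy D_TV(ν_t^{π₁,P}, ν_t^{π₂,P}) ≤ (t+1)·ε_π. -/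
open scoped ENNReal

noncomputable section

/-- Extended-valued `L¹` distance. -/
def etv {X : Type*} (p q : PMF X) : ℝ≥0∞ := ∑' x : X, ‖(p x).toReal - (q x).toReal‖ₑ

theorem enorm_toReal_pmf {X : Type*} (p : PMF X) (x : X) : ‖(p x).toReal‖ₑ = p x := by
  rw [Real.enorm_eq_ofReal ENNReal.toReal_nonneg, ENNReal.ofReal_toReal (p.apply_ne_top x)]

theorem etv_ne_top {X : Type*} (p q : PMF X) : etv p q ≠ ⊤ := by
  have h : etv p q ≤ ∑' x, (p x + q x) := by
    refine ENNReal.tsum_le_tsum fun x => ?_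
    refine enorm_sub_le.trans ?_
    rw [enorm_toReal_pmf, enorm_toReal_pmf]
  rw [ENNReal.tsum_add, p.tsum_coe, q.tsum_coe] at h
  exact ne_top_of_le_ne_top (by norm_num) h

theorem tv_eq {X : Type*} (p q : PMF X) : tv p q = (1 / 2) * (etv p q).toReal := by
  unfold tv etv
  rw [ENNReal.tsum_toReal_eq (fun x => enorm_ne_top)]
  simp

theorem etv_bind_le {X Y : Type*} (p q : PMF X) (f g : X → PMF Y) (c : ℝ≥0∞)
    (hc : ∀ x, etv (f x) (g x) ≤ c) : etv (p.bind f) (q.bind g) ≤ etv p q + c := by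
  have key : ∀ (r : PMF X) (k : X → PMF Y) (y : Y),
      Summable (fun x => (r x).toReal * (k x y).toReal) ∧
      ((r.bind k) y).toReal = ∑' x, (r x).toReal * (k x y).toReal := by
    intro r k y
    have h1 : (r.bind k) y = ∑' x, r x * k x y := PMF.bind_apply r k y
    have h2 : (∑' x, r x * k x y) ≠ ⊤ := h1 ▸ (r.bind k).apply_ne_top y
    constructor
    · simpa [ENNReal.toReal_mul] using ENNReal.summable_toReal h2
    · rw [h1, ENNReal.tsum_toReal_eq (fun x => ENNReal.ne_top_of_tsum_ne_top h2 x)]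
      simp [ENNReal.toReal_mul]
  have hpt : ∀ y, ‖((p.bind f) y).toReal - ((q.bind g) y).toReal‖ₑ ≤
      ∑' x, (‖(p x).toReal - (q x).toReal‖ₑ * f x y +
        q x * ‖(f x y).toReal - (g x y).toReal‖ₑ) := by
    intro y
    rw [(key p f y).2, (key q g y).2, ← (key p f y).1.tsum_sub (key q g y).1]
    refine (enorm_tsum_le_tsum_enorm).trans (ENNReal.tsum_le_tsum fun x => ?_)
    have : (p x).toReal * (f x y).toReal - (q x).toReal * (g x y).toReal =
      ((p x).toReal - (q x).toReal) * (f x y).toReal +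
        (q x).toReal * ((f x y).toReal - (g x y).toReal) := by ring
    rw [this]
    refine (enorm_add_le _ _).trans ?_
    rw [enorm_mul, enorm_mul, enorm_toReal_pmf, enorm_toReal_pmf]
  refine (ENNReal.tsum_le_tsum hpt).trans ?_
  rw [ENNReal.tsum_comm]
  simp_rw [ENNReal.tsum_add, ENNReal.tsum_mul_left, PMF.tsum_coe, mul_one]
  refine add_le_add le_rfl ?_
  calc ∑' x, q x * ∑' y, ‖(f x y).toReal - (g x y).toReal‖ₑ
      ≤ ∑' x, q x * c := ENNReal.tsum_le_tsum fun x => mul_le_mul_right (hc x) _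
    _ = c := by rw [ENNReal.tsum_mul_right, q.tsum_coe, one_mul]

theorem etv_self {X : Type*} (p : PMF X) : etv p p = 0 := by simp [etv]

theorem tv_bind_le {X Y : Type*} (p q : PMF X) (f g : X → PMF Y) (c : ℝ) (hc0 : 0 ≤ c)
    (hc : ∀ x, tv (f x) (g x) ≤ c) : tv (p.bind f) (q.bind g) ≤ tv p q + c := by
  have h := etv_bind_le p q f g (ENNReal.ofReal (2 * c)) (fun x => by
    have := hc x
    rw [tv_eq] at this
    rw [ENNReal.le_ofReal_iff_toReal_le (etv_ne_top _ _) (by positivity)]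
    linarith)
  have h' := ENNReal.toReal_mono (ENNReal.add_ne_top.2 ⟨etv_ne_top _ _, ENNReal.ofReal_ne_top⟩) h
  rw [ENNReal.toReal_add (etv_ne_top _ _) ENNReal.ofReal_ne_top, ENNReal.toReal_ofReal (by positivity)] at h'
  rw [tv_eq, tv_eq]
  linarith

theorem tv_self {X : Type*} (p : PMF X) : tv p p = 0 := by simp [tv]

/-- **State-action distribution distance under policy shift.**  For every `t ≥ 0`,
`D_TV(ν_t^{π₁,P}, ν_t^{π₂,P}) ≤ (t+1)·ε_π`. -/
theorem tv_nu_le_policy_shift {S A : Type*} [Countable S] [Countable A]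
    (P : S × A → PMF S) (π₁ π₂ : S → PMF A) (ρ0 : PMF S)
    (επ : ℝ) (hεπ : επ = ⨆ s : S, tv (π₁ s) (π₂ s)) :
    ∀ t : ℕ, tv (nu ρ0 π₁ P t) (nu ρ0 π₂ P t) ≤ (t + 1 : ℝ) * επ := by
  intro t
  have h0 : 0 ≤ επ := hεπ ▸ Real.iSup_nonneg fun s => tv_nonneg _ _
  have hle : ∀ s, tv (π₁ s) (π₂ s) ≤ επ := fun s => by
    rw [hεπ]
    exact le_ciSup (f := fun s => tv (π₁ s) (π₂ s)) ⟨1, by rintro _ ⟨s, rfl⟩; exact tv_le_one _ _⟩ s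
  have hk : ∀ s, tv ((π₁ s).map fun a => (s, a)) ((π₂ s).map fun a => (s, a)) ≤ επ := fun s => by
    have := tv_bind_le (π₁ s) (π₂ s) (fun a => PMF.pure (s, a)) (fun a => PMF.pure (s, a)) 0 le_rfl
      (fun a => (tv_self _).le)
    exact this.trans (by linarith [hle s])
  induction t with
  | zero =>
    have := tv_bind_le ρ0 ρ0 _ _ επ h0 hk
    rw [tv_self] at this
    simpa [nu] using this
  | succ t ih =>
    have h1 := tv_bind_le (nu ρ0 π₁ P t) (nu ρ0 π₂ P t) P P 0 le_rfl (fun a => (tv_self _).le)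
    have h2 := tv_bind_le ((nu ρ0 π₁ P t).bind P) ((nu ρ0 π₂ P t).bind P) _ _ επ h0 hk
    rw [PMF.bind_bind, PMF.bind_bind] at h2
    simp only [nu]
    push_cast
    linarith
end
end

section
/- (Return gap from accumulated model error, same policy.) Let P and P̂ be two dynamics, π a policy, and for t ≥ 1 set ε_t^m := E_{(s,a)∼ν_{t-1}^{π,P̂}}[D_TV(P̂(·|s,a), P(·|s,a))]. Then the gap between the return of π under the model and under the true dynamics satisfies |J_{P̂}(π) − J_P(π)| ≤ (2·R_max/(1−γ))·Σ_{t=1}^∞ γ^t·ε_t^m. -/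
open scoped ENNReal

noncomputable section

/-- The `l1` distance of two probability mass functions. -/
def l1d {X : Type*} (p q : PMF X) : ℝ := ∑' x : X, |(p x).toReal - (q x).toReal|

lemma pmf_hasSum {X : Type*} (p : PMF X) : HasSum (fun x => (p x).toReal) 1 := by
  have h1 : Summable (fun x => (p x).toReal) := ENNReal.summable_toReal p.tsum_coe_ne_top
  have h2 : ∑' x, (p x).toReal = 1 := by
    rw [← ENNReal.tsum_toReal_eq (fun x => p.apply_ne_top x), p.tsum_coe]; simp
  exact h2 ▸ h1.hasSum

lemma l1d_summable {X : Type*} (p q : PMF X) :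
    Summable (fun x => |(p x).toReal - (q x).toReal|) :=
  ((pmf_hasSum p).summable.sub (pmf_hasSum q).summable).abs

lemma l1d_nonneg {X : Type*} (p q : PMF X) : 0 ≤ l1d p q := tsum_nonneg fun _ => abs_nonneg _

lemma l1d_self {X : Type*} (p : PMF X) : l1d p p = 0 := by simp [l1d]

lemma l1d_le_two {X : Type*} (p q : PMF X) : l1d p q ≤ 2 := by
  have h := (pmf_hasSum p).add (pmf_hasSum q)
  have h2 : l1d p q ≤ ∑' x, ((p x).toReal + (q x).toReal) := by
    refine (l1d_summable p q).tsum_le_tsum (fun x => ?_) h.summable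
    have h1 : 0 ≤ (p x).toReal := ENNReal.toReal_nonneg
    have h2 : 0 ≤ (q x).toReal := ENNReal.toReal_nonneg
    rw [abs_le]; constructor <;> linarith
  rw [h.tsum_eq] at h2
  linarith

lemma weighted_summable {X : Type*} (p : PMF X) (f : X → ℝ) (C : ℝ) (hf : ∀ x, |f x| ≤ C) :
    Summable (fun x => (p x).toReal * f x) := by
  refine Summable.of_norm_bounded (g := fun x => (p x).toReal * C)
    ((pmf_hasSum p).summable.mul_right C) (fun x => ?_)
  rw [Real.norm_eq_abs, abs_mul, abs_of_nonneg ENNReal.toReal_nonneg]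
  exact mul_le_mul_of_nonneg_left (hf x) ENNReal.toReal_nonneg

lemma bind_hasSum {X Y : Type*} (p : PMF X) (f : X → PMF Y) (y : Y) :
    HasSum (fun x => (p x).toReal * (f x y).toReal) ((p.bind f) y).toReal := by
  have hs : Summable (fun x => (p x).toReal * (f x y).toReal) := by
    refine weighted_summable p _ 1 fun x => ?_
    rw [abs_of_nonneg ENNReal.toReal_nonneg]
    exact ENNReal.toReal_le_of_le_ofReal zero_le_one (by simpa using (f x).coe_le_one y)
  have h : ((p.bind f) y).toReal = ∑' x, (p x).toReal * (f x y).toReal := by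
    rw [PMF.bind_apply, ENNReal.tsum_toReal_eq]
    · simp [ENNReal.toReal_mul]
    · exact fun x => ENNReal.mul_ne_top (p.apply_ne_top x) ((f x).apply_ne_top y)
  rw [h]; exact hs.hasSum

lemma l1d_bind {X Y : Type*} (p q : PMF X) (f g : X → PMF Y) :
    l1d (p.bind f) (q.bind g) ≤ l1d p q + ∑' x, (p x).toReal * l1d (f x) (g x) := by
  set F : X × Y → ℝ := fun z => (p z.1).toReal * |(f z.1 z.2).toReal - (g z.1 z.2).toReal|
    + |(p z.1).toReal - (q z.1).toReal| * (g z.1 z.2).toReal with hF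
  have hF0 : ∀ z, 0 ≤ F z := fun z => by
    have := @ENNReal.toReal_nonneg (p z.1)
    have := @ENNReal.toReal_nonneg (g z.1 z.2)
    simp only [hF]; positivity
  have hrow : ∀ x, HasSum (fun y => F (x, y))
      ((p x).toReal * l1d (f x) (g x) + |(p x).toReal - (q x).toReal| * 1) := fun x =>
    ((l1d_summable (f x) (g x)).hasSum.mul_left _).add ((pmf_hasSum (g x)).mul_left _)
  have hw : Summable (fun x => (p x).toReal * l1d (f x) (g x)) :=
    weighted_summable p _ 2 fun x => by
      rw [abs_of_nonneg (l1d_nonneg _ _)]; exact l1d_le_two _ _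
  have hout := hw.hasSum.add ((l1d_summable p q).hasSum.mul_right 1)
  have hsum : Summable F := by
    rw [summable_prod_of_nonneg hF0]
    refine ⟨fun x => (hrow x).summable, ?_⟩
    simp only [fun x => (hrow x).tsum_eq]
    exact hout.summable
  have htot : ∑' z, F z = (∑' x, (p x).toReal * l1d (f x) (g x)) + l1d p q * 1 := by
    rw [hsum.tsum_prod]
    simp only [fun x => (hrow x).tsum_eq]
    exact hout.tsum_eq
  have hsw : Summable (fun z : Y × X => F z.swap) := (Equiv.prodComm Y X).summable_iff.mpr hsum
  have htot2 : ∑' z, F z = ∑' y, ∑' x, F (x, y) := by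
    rw [← (Equiv.prodComm Y X).tsum_eq F]
    exact hsw.tsum_prod
  have hle : l1d (p.bind f) (q.bind g) ≤ ∑' y, ∑' x, F (x, y) := by
    refine (l1d_summable _ _).tsum_le_tsum (fun y => ?_) hsw.prod
    have hd := (bind_hasSum p f y).sub (bind_hasSum q g y)
    have hFy : Summable (fun x => F (x, y)) := hsw.prod_factor y
    rw [← hd.tsum_eq, ← Real.norm_eq_abs]
    refine tsum_of_norm_bounded hFy.hasSum (fun x => ?_)
    have e : (p x).toReal * (f x y).toReal - (q x).toReal * (g x y).toReal
      = (p x).toReal * ((f x y).toReal - (g x y).toReal)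
        + ((p x).toReal - (q x).toReal) * (g x y).toReal := by ring
    rw [e, Real.norm_eq_abs]
    refine (abs_add_le _ _).trans ?_
    rw [abs_mul, abs_mul, abs_of_nonneg (@ENNReal.toReal_nonneg (p x)),
      abs_of_nonneg (@ENNReal.toReal_nonneg (g x y))]
  linarith

lemma l1d_nu_succ {S A : Type*} (P Phat : S × A → PMF S) (π : S → PMF A) (ρ0 : PMF S) (t : ℕ) :
    l1d (nu ρ0 π Phat (t + 1)) (nu ρ0 π P (t + 1)) ≤ l1d (nu ρ0 π Phat t) (nu ρ0 π P t) +
      2 * ∑' sa : S × A, ((nu ρ0 π Phat t) sa).toReal * tv (Phat sa) (P sa) := by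
  rw [nu, nu]
  refine (l1d_bind _ _ _ _).trans ?_
  gcongr
  rw [← tsum_mul_left]
  have e : ∀ sa, 2 * (((nu ρ0 π Phat t) sa).toReal * tv (Phat sa) (P sa))
      = ((nu ρ0 π Phat t) sa).toReal * l1d (Phat sa) (P sa) := fun sa => by
    simp only [tv, l1d]; ring
  simp only [e]
  refine Summable.tsum_le_tsum (fun sa => ?_) ?_ ?_
  · refine mul_le_mul_of_nonneg_left ?_ ENNReal.toReal_nonneg
    refine (l1d_bind _ _ _ _).trans ?_
    simp [l1d_self]
  · exact weighted_summable _ _ 2 fun x => by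
      rw [abs_of_nonneg (l1d_nonneg _ _)]; exact l1d_le_two _ _
  · exact weighted_summable _ _ 2 fun x => by
      rw [abs_of_nonneg (l1d_nonneg _ _)]; exact l1d_le_two _ _

lemma expect_diff {X : Type*} (p q : PMF X) (R : X → ℝ) (C : ℝ) (hR : ∀ x, |R x| ≤ C) :
    |∑' x, (p x).toReal * R x - ∑' x, (q x).toReal * R x| ≤ l1d p q * C := by
  rw [← (weighted_summable p R C hR).tsum_sub (weighted_summable q R C hR), ← Real.norm_eq_abs]
  refine tsum_of_norm_bounded ((l1d_summable p q).hasSum.mul_right C) fun x => ?_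
  rw [← sub_mul, Real.norm_eq_abs, abs_mul]
  exact mul_le_mul_of_nonneg_left (hR x) (abs_nonneg _)

lemma expect_bound {X : Type*} (p : PMF X) (R : X → ℝ) (C : ℝ) (hR : ∀ x, |R x| ≤ C) :
    |∑' x, (p x).toReal * R x| ≤ C := by
  have h := (pmf_hasSum p).mul_right C
  rw [one_mul] at h
  rw [← Real.norm_eq_abs]
  refine tsum_of_norm_bounded h fun x => ?_
  rw [Real.norm_eq_abs, abs_mul, abs_of_nonneg (@ENNReal.toReal_nonneg (p x))]
  exact mul_le_mul_of_nonneg_left (hR x) ENNReal.toReal_nonneg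

lemma disc_summable (γ : ℝ) (hγ0 : 0 ≤ γ) (hγ1 : γ < 1) (f : ℕ → ℝ) (C : ℝ)
    (hf : ∀ t, |f t| ≤ C) : Summable (fun t => γ ^ t * f t) := by
  refine Summable.of_norm_bounded (g := fun t => γ ^ t * C)
    ((summable_geometric_of_lt_one hγ0 hγ1).mul_right C) fun t => ?_
  rw [Real.norm_eq_abs, abs_mul, abs_of_nonneg (pow_nonneg hγ0 t)]
  exact mul_le_mul_of_nonneg_left (hf t) (pow_nonneg hγ0 t)

/-- **Return gap from accumulated model error, same policy.**
`|J_{P̂}(π) - J_P(π)| ≤ (2·R_max/(1-γ))·Σ_{t≥1} γ^t·ε_t^m`. -/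
theorem return_gap_model_error {S A : Type*} [Countable S] [Countable A]
    (P Phat : S × A → PMF S) (π : S → PMF A)
    (R : S × A → ℝ) (Rmax : ℝ) (hR : ∀ sa : S × A, |R sa| ≤ Rmax)
    (γ : ℝ) (hγ0 : 0 ≤ γ) (hγ1 : γ < 1) (ρ0 : PMF S)
    (εm : ℕ → ℝ)
    (hεm : ∀ t : ℕ, εm (t + 1) =
      ∑' sa : S × A, ((nu ρ0 π Phat t) sa).toReal * tv (Phat sa) (P sa)) :
    |J R γ ρ0 π Phat - J R γ ρ0 π P| ≤
      2 * Rmax / (1 - γ) * ∑' t : ℕ, γ ^ (t + 1) * εm (t + 1) := by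
  have hC : 0 ≤ Rmax := by
    obtain ⟨sa, -⟩ := (nu ρ0 π P 0).support_nonempty
    exact (abs_nonneg _).trans (hR sa)
  set d : ℕ → ℝ := fun t => l1d (nu ρ0 π Phat t) (nu ρ0 π P t) with hd
  have hd2 : ∀ t, |d t| ≤ 2 := fun t => by
    rw [abs_of_nonneg (l1d_nonneg _ _)]; exact l1d_le_two _ _
  have hds := disc_summable γ hγ0 hγ1 d 2 hd2
  have hd0 : d 0 = 0 := by simp only [hd, nu]; exact l1d_self _
  have hstep : ∀ t, d (t + 1) ≤ d t + 2 * εm (t + 1) := fun t => by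
    rw [hεm]; exact l1d_nu_succ P Phat π ρ0 t
  have hε : ∀ t, |εm (t + 1)| ≤ 1 := fun t => by
    rw [hεm]
    refine expect_bound _ _ 1 fun sa => ?_
    have h1 := l1d_nonneg (Phat sa) (P sa)
    have h2 := l1d_le_two (Phat sa) (P sa)
    have h3 : tv (Phat sa) (P sa) = 1 / 2 * l1d (Phat sa) (P sa) := rfl
    rw [h3, abs_of_nonneg (by positivity)]
    linarith
  have hεs : Summable (fun t => γ ^ (t + 1) * εm (t + 1)) := by
    have h := (disc_summable γ hγ0 hγ1 (fun t => εm (t + 1)) 1 hε).mul_left γ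
    refine h.congr fun t => ?_
    ring
  have hD : ∑' t, γ ^ t * d t ≤ γ * (∑' t, γ ^ t * d t)
      + 2 * ∑' t, γ ^ (t + 1) * εm (t + 1) := by
    have h1 : ∑' t, γ ^ t * d t = ∑' t, γ ^ (t + 1) * d (t + 1) := by
      rw [hds.tsum_eq_zero_add, hd0]; simp
    have h2 := (hds.hasSum.mul_left γ).add (hεs.hasSum.mul_left 2)
    rw [← h2.tsum_eq]
    refine h1.le.trans ?_
    refine Summable.tsum_le_tsum (fun t => ?_) ((summable_nat_add_iff 1).mpr hds) h2.summable
    have := mul_le_mul_of_nonneg_left (hstep t) (pow_nonneg hγ0 (t + 1))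
    refine this.trans (le_of_eq ?_)
    ring
  have hJ : |J R γ ρ0 π Phat - J R γ ρ0 π P| ≤ (∑' t, γ ^ t * d t) * Rmax := by
    unfold J
    rw [← (disc_summable γ hγ0 hγ1 _ Rmax fun t => expect_bound _ R Rmax hR).tsum_sub
      (disc_summable γ hγ0 hγ1 _ Rmax fun t => expect_bound _ R Rmax hR), ← Real.norm_eq_abs]
    refine tsum_of_norm_bounded (hds.hasSum.mul_right Rmax) fun t => ?_
    rw [← mul_sub, Real.norm_eq_abs, abs_mul, abs_of_nonneg (pow_nonneg hγ0 t), mul_assoc]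
    exact mul_le_mul_of_nonneg_left (expect_diff _ _ R Rmax hR) (pow_nonneg hγ0 t)
  have h1γ : 0 < 1 - γ := by linarith
  refine hJ.trans ?_
  rw [div_mul_eq_mul_div, le_div_iff₀ h1γ]
  nlinarith [mul_le_mul_of_nonneg_right hD hC]
end
end
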